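/- arXiv:0811.3576 — 6 statements merged into one kernel-verified Lean document; each statement's English description precedes it below -/
import Mathlib

section
/- Let X be an infinite semigroup satisfying properties (1) and (2). Let A be an index set of cardinality at most that of X, and for each α ∈ A let F_α be a nonempty finite subset of X. Then there exist elements x_α ∈ X for α ∈ A such that (i) the mapping x ↦ x·x_α is injective on F_α for every α ∈ A, and (ii) the sets F_α·x_α = {x·x_α | x ∈ F_α} and F_β·x_β are disjoint for all α, β ∈ A with α ≠ β. -/
/-!
Well-order the index set `A` so that every proper initial segment has fewer than `#X` elements, and
choose the translating elements by transfinite recursion. At stage `a`, the translates chosen so far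
form a union of fewer than `#X` finite sets, hence a set `P` with `#P < #X`. By property (2) and
finiteness of `F a`, fewer than `#X` elements `z` move some point of `F a` into `P`, while by
property (1) there are `#X` elements `z` acting injectively on `F a`; so some `z` is admissible.
-/

open Cardinal

universe u v

theorem mk_biUnion_finset_lt {ι : Type v} {X : Type u} {κ : Cardinal.{u}} (hκ : ℵ₀ ≤ κ)
    {T : Finset ι} {S : ι → Set X} (hS : ∀ i ∈ T, #(S i) < κ) :
    #(⋃ i ∈ T, S i) < κ := by
  rw [← Finset.sup_set_eq_biUnion]
  refine Finset.sup_induction (p := fun U : Set X => #U < κ) ?_ ?_ hS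
  · exact (mk_eq_zero (∅ : Set X)).trans_lt (aleph0_pos.trans_le hκ)
  · exact fun U hU V hV => (mk_union_le U V).trans_lt (add_lt_of_lt hκ hU hV)

theorem mk_iUnion_lt_of_finite {ι : Type v} {X : Type u} {κ : Cardinal.{u}} (hκ : ℵ₀ ≤ κ)
    (hι : lift.{u} #ι < lift.{v} κ) {S : ι → Set X} (hS : ∀ i, (S i).Finite) :
    #(⋃ i, S i) < κ := by
  rcases finite_or_infinite ι with _ | _
  · exact (Set.finite_iUnion hS).lt_aleph0.trans_le hκ
  · rw [← lift_lt.{u, v}]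
    calc lift.{v} #(⋃ i, S i)
        ≤ lift.{u} #ι * ⨆ i, lift.{v} #(S i) := mk_iUnion_le_lift S
      _ ≤ lift.{u} #ι * ℵ₀ := by
        gcongr
        exact ciSup_le' fun i => lift_le_aleph0.2 (hS i).lt_aleph0.le
      _ = lift.{u} #ι := mul_aleph0_eq (aleph0_le_lift.2 (aleph0_le_mk ι))
      _ < lift.{v} κ := hι

theorem exists_forall_of_forall_exists_Iio {ι X : Type*} [Preorder ι] [WellFoundedLT ι]
    {p : ∀ i : ι, (Set.Iio i → X) → X → Prop} (h : ∀ i g, ∃ z, p i g z) :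
    ∃ x : ι → X, ∀ i, p i (fun j => x j) (x i) := by
  choose next hnext using h
  let step (i : ι) (previous : ∀ j < i, X) : X := next i fun j => previous j j.2
  refine ⟨WellFoundedLT.fix step, fun i => ?_⟩
  rw [WellFoundedLT.fix_eq step i]
  exact hnext i _

theorem exists_injOn_smul_disjoint {M X : Type*} [SMul M X] [Infinite X] {F : Finset M} {P : Set X}
    (hF : #{z : X | Set.InjOn (· • z) (F : Set M)} = #X)
    (hP : ∀ t ∈ F, #{z : X | t • z ∈ P} < #X) :
    ∃ z : X, Set.InjOn (· • z) (F : Set M) ∧ Disjoint P ((· • z) '' (F : Set M)) := by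
  have hbad : #(⋃ t ∈ F, {z : X | t • z ∈ P}) < #{z : X | Set.InjOn (· • z) (F : Set M)} :=
    (mk_biUnion_finset_lt (aleph0_le_mk X) hP).trans_eq hF.symm
  obtain ⟨z, hinj, hz⟩ := sdiff_nonempty_of_mk_lt_mk hbad
  refine ⟨z, hinj, Set.disjoint_right.2 ?_⟩
  rintro _ ⟨t, ht, rfl⟩ htP
  exact hz (Set.mem_biUnion ht htP)

theorem stmt0_general {M : Type*} {X : Type u} [SMul M X] [Infinite X]
    (h1 : ∀ F : Finset M, #{z : X | ∀ x ∈ F, ∀ y ∈ F, x ≠ y → x • z ≠ y • z} = #X)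
    (h2 : ∀ P : Set X, #P < #X → ∀ x : M, #{z : X | x • z ∈ P} < #X)
    {A : Type v} (hA : lift.{u} #A ≤ lift.{v} #X) (F : A → Finset M) :
    ∃ x : A → X,
      (∀ a : A, Set.InjOn (· • x a) (F a : Set M)) ∧
      (∀ a b : A, a ≠ b →
        Disjoint ((· • x a) '' (F a : Set M)) ((· • x b) '' (F b : Set M))) := by
  have hinj (E : Finset M) : #{z : X | Set.InjOn (· • z) (E : Set M)} = #X := by
    simpa only [Set.InjOn, Finset.mem_coe, ne_eq, not_imp_not] using h1 E
  obtain ⟨_, _, hord⟩ := exists_ord_eq_type_lt A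
  have exists_next (a : A) (g : Set.Iio a → X) :
      ∃ z : X, Set.InjOn (· • z) (F a : Set M) ∧
        Disjoint (⋃ b : Set.Iio a, (· • g b) '' (F b : Set M)) ((· • z) '' (F a : Set M)) := by
    have hsegment : lift.{u} #(Set.Iio a) < lift.{v} #X :=
      (lift_lt.2 (mk_Iio_lt a hord)).trans_le hA
    have hused : #(⋃ b : Set.Iio a, (· • g b) '' (F b : Set M)) < #X :=
      mk_iUnion_lt_of_finite (aleph0_le_mk X) hsegment fun b => (F b).finite_toSet.image _
    exact exists_injOn_smul_disjoint (hinj (F a)) fun t _ => h2 _ hused t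
  obtain ⟨x, hx⟩ := exists_forall_of_forall_exists_Iio exists_next
  have hdisj : Pairwise (Function.onFun Disjoint fun a => (· • x a) '' (F a : Set M)) :=
    (pairwise_disjoint_on _).2 fun b a hba => Set.disjoint_iUnion_left.1 (hx a).2 ⟨b, hba⟩
  exact ⟨x, fun a => (hx a).1, fun _ _ hab => hdisj hab⟩

/-- Lemma on choosing translating elements for families of finite sets in an infinite
semigroup satisfying properties (1) and (2). -/
theorem stmt0 {X : Type u} [Semigroup X] [Infinite X]
    (h1 : ∀ F : Finset X,
      #{z : X | ∀ x ∈ F, ∀ y ∈ F, x ≠ y → x * z ≠ y * z} = #X)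
    (h2 : ∀ P : Set X, #↥P < #X → ∀ x : X, #{z : X | x * z ∈ P} < #X)
    {A : Type v} (hA : Cardinal.lift.{u} #A ≤ Cardinal.lift.{v} #X) (F : A → Finset X) (hF : ∀ a, (F a).Nonempty) :
    ∃ x : A → X,
      (∀ a : A, Set.InjOn (fun t => t * x a) (F a : Set X)) ∧
      (∀ a b : A, a ≠ b →
        Disjoint ((fun t => t * x a) '' (F a : Set X)) ((fun t => t * x b) '' (F b : Set X))) :=
  stmt0_general h1 h2 hA F
end

section
/- Every infinite group G (with the discrete uniformity) is ambitable: there exists a function f : G → [0,1] such that the right orbit {z ↦ f(zx) | x ∈ G} of f is dense in the product space [0,1]^G. -/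
/-!
A finite pattern on `G` is a finite set `I ⊆ G` together with a prescription of values on `I`. If
the values are taken from a dense family indexed by `G`, there are only `#G` finite patterns, and
`f` has a dense right orbit as soon as each of them is read off on some translate `I * x` of its
domain. Choosing the translating elements `x` by transfinite recursion along a well-order of
length `#G` makes these translates pairwise disjoint: at each stage every earlier choice forbids
only finitely many elements, so fewer than `#G` stages never exhaust `G`. All patterns can then be
imposed on a single function.
-/

open Cardinal Function Set

universe u v

theorem exists_forall_notMem_of_finite {J : Type u} {α : Type v} [Infinite α]
    (hJ : lift.{v} #J < lift.{u} #α) {s : J → Set α} (hs : ∀ j, (s j).Finite) :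
    ∃ a, ∀ j, a ∉ s j := by
  by_contra! hcover
  have hunion : ⋃ j, ((hs j).toFinset : Set α) = Set.univ := by
    simpa only [Finite.coe_toFinset, iUnion_eq_univ_iff] using hcover
  have hle : lift.{u} #α ≤ lift.{v} #J :=
    (lift_le.2 (le_range_of_union_finset_eq_univ _ hunion)).trans mk_range_le_lift
  exact hle.not_gt hJ

theorem exists_forall_lt_notMem_of_finite {ι : Type u} {α : Type v} [Preorder ι]
    [WellFoundedLT ι] [Infinite α] (hι : ∀ i : ι, lift.{v} #(Iio i) < lift.{u} #α)
    {s : ι → ι → α → Set α} (hs : ∀ i j a, (s i j a).Finite) :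
    ∃ x : ι → α, ∀ i, ∀ j < i, x i ∉ s i j (x j) := by
  have extend_choice (i : ι) (x : ∀ j, j < i → α) : ∃ a, ∀ j (hj : j < i), a ∉ s i j (x j hj) := by
    obtain ⟨a, ha⟩ := exists_forall_notMem_of_finite (hι i)
      fun j : Iio i => hs i j (x j j.2)
    exact ⟨a, fun j hj => ha ⟨j, hj⟩⟩
  choose next hnext using extend_choice
  refine ⟨wellFounded_lt.fix next, fun i j hj => ?_⟩
  rw [wellFounded_lt.fix_eq next i]
  exact hnext i (fun j _ => wellFounded_lt.fix next j) j hj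

theorem exists_injective_sigma_mul {ι : Type u} {G : Type v} [Mul G] [IsCancelMul G] [Infinite G]
    (hι : lift.{v} #ι ≤ lift.{u} #G) (A : ι → Finset G) :
    ∃ x : ι → G, Injective fun p : Σ i, A i => (p.2 : G) * x p.1 := by
  obtain ⟨_, _, hord⟩ := exists_ord_eq_type_lt ι
  have hIio (i : ι) : lift.{v} #(Iio i) < lift.{u} #G :=
    (lift_lt.2 (mk_Iio_lt i hord)).trans_le hι
  have hfinite (i j : ι) (y : G) : (⋃ a ∈ A i, (a * ·) ⁻¹' ((· * y) '' A j)).Finite :=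
    (A i).finite_toSet.biUnion fun a _ =>
      ((A j).finite_toSet.image _).preimage (mul_right_injective a).injOn
  obtain ⟨x, hx⟩ := exists_forall_lt_notMem_of_finite hIio hfinite
  have hne {i j : ι} (hj : j < i) (a : A i) (b : A j) : (a : G) * x i ≠ b * x j := fun h =>
    hx i j hj (mem_biUnion a.2 ⟨b, b.2, h.symm⟩)
  refine ⟨x, ?_⟩
  rintro ⟨i, a⟩ ⟨j, b⟩ (h : (a : G) * x i = b * x j)
  obtain hlt | rfl | hgt := lt_trichotomy i j
  · exact absurd h.symm (hne hlt b a)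
  · rw [Subtype.ext (mul_right_cancel h)]
  · exact absurd h (hne hgt a b)

theorem mk_sigma_finset_arrow_le (α : Type u) [Infinite α] : #(Σ I : Finset α, I → α) ≤ #α := by
  have hα : ℵ₀ ≤ #α := aleph0_le_mk α
  calc #(Σ I : Finset α, I → α)
      = sum fun I : Finset α => #α ^ I.card := by simp [mk_sigma]
    _ ≤ sum fun _ : Finset α => #α := sum_le_sum _ _ fun I => power_nat_le hα
    _ = #α := by rw [sum_const', mk_finset_of_infinite, mul_eq_self hα]

theorem dense_pi_of_forall_finset_eq {ι : Type*} {X : ι → Type*} [∀ i, TopologicalSpace (X i)]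
    {s t : Set (∀ i, X i)} (ht : Dense t)
    (hst : ∀ p ∈ t, ∀ I : Finset ι, ∃ q ∈ s, ∀ i ∈ I, q i = p i) : Dense s := by
  refine dense_iff_inter_open.2 fun U hU hne => ?_
  obtain ⟨p, hpU, hpt⟩ := ht.inter_open_nonempty U hU hne
  obtain ⟨I, u, hu, hIU⟩ := isOpen_pi_iff.1 hU p hpU
  obtain ⟨q, hqs, hqp⟩ := hst p hpt I
  exact ⟨q, hIU fun i hi => (hqp i hi).symm ▸ (hu i hi).2, hqs⟩

theorem exists_denseRange_of_infinite (α Y : Type*) [Infinite α] [TopologicalSpace Y]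
    [TopologicalSpace.SeparableSpace Y] [Nonempty Y] : ∃ d : α → Y, DenseRange d := by
  have hsurj : Surjective (invFun (Infinite.natEmbedding α)) :=
    invFun_surjective (Infinite.natEmbedding α).injective
  refine ⟨TopologicalSpace.denseSeq Y ∘ invFun (Infinite.natEmbedding α), ?_⟩
  rw [DenseRange, hsurj.range_comp]
  exact TopologicalSpace.denseRange_denseSeq Y

theorem stmt2_general {G Y : Type*} [Mul G] [IsCancelMul G] [Infinite G] [TopologicalSpace Y]
    {d : G → Y} (hd : DenseRange d) :
    ∃ f : G → Y, Dense (range fun x : G => fun z : G => f (z * x)) := by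
  obtain ⟨x, hx⟩ := exists_injective_sigma_mul (lift_le.2 (mk_sigma_finset_arrow_le G)) Sigma.fst
  let f : G → Y := extend (fun p : Σ i : Σ I : Finset G, I → G, i.1 => (p.2 : G) * x p.1)
    (fun p => d (p.1.2 p.2)) d
  have hf (I : Finset G) (c : I → G) (a : I) : f (a * x ⟨I, c⟩) = d (c a) :=
    hx.extend_apply _ _ ⟨⟨I, c⟩, a⟩
  refine ⟨f, dense_pi_of_forall_finset_eq (DenseRange.piMap fun _ => hd) ?_⟩
  rintro _ ⟨c, rfl⟩ I
  exact ⟨_, ⟨x ⟨I, I.restrict c⟩, rfl⟩, fun a ha => hf I (I.restrict c) ⟨a, ha⟩⟩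

/-- Every infinite (discrete) group is ambitable. -/
theorem stmt2 {G : Type*} [Group G] [Infinite G] :
    ∃ f : G → Set.Icc (0 : ℝ) 1,
      Dense (Set.range fun x : G => fun z : G => f (z * x)) := by
  obtain ⟨d, hd⟩ := exists_denseRange_of_infinite G (Set.Icc (0 : ℝ) 1)
  exact stmt2_general hd
end

section
/- Let X be an infinite semigroup satisfying properties (1) and (2). Endow the space of ultrafilters on X (the Stone–Čech compactification of the discrete space X) with its standard compact topology and with the semigroup operation in which A ∈ p*q if and only if {x ∈ X | {y ∈ X | xy ∈ A} ∈ q} ∈ p. Then for an ultrafilter p on X, the map q ↦ p*q is continuous if and only if p is principal, i.e. the topological centre of the semigroup of ultrafilters equals X. -/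
open Cardinal

/-!
Let `p` be an ultrafilter such that `q ↦ p * q` is continuous, and let `t` range over pairs of
finite subsets of `X`. Properties (1) and (2) allow a transfinite choice of points `z t` for which
all the products `x * z t` with `x ∈ t.1` are distinct, so that a single function `d` decodes
`x * z t` as `(t, x)`. Let `v t` be the image of `p` under `x ↦ d (x * z t)`. Along an ultrafilter
`q` containing every set `{t | x ∈ t.1}`, continuity of `p * ·` says that
`lim_{t → q} v t = lim_{x → p} lim_{t → q} (t, x)`.

On first coordinates this limit is `q` itself, and a diagonal argument over the second component
of the index shows that `v t` lives on `{t} × X` for cofinally many `t`. As `v t` eventually also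
lives on the pairs `(s, y)` with `y ∈ s.1`, finitely many of which have `s = t`, it is then a point
`(t, ξ t)`. The set of pairs `(t, x)` with `x ≠ ξ t` does not belong to these `v t`, hence not to
the iterated limit, which forces some `x` to equal `ξ t` for `q`-many `t`; on second coordinates
the limit formula reads `lim_{t → q} ξ t = p`, so `p` is principal at `x`.
-/

open Filter Function Set

universe u

attribute [local instance] Ultrafilter.mul

section SmallUnions

variable {ι α : Type u} {κ : Cardinal.{u}}

theorem mk_biUnion_finset_lt_s5 (hκ : ℵ₀ ≤ κ) (F : Finset ι) {A : ι → Set α}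
    (hA : ∀ i ∈ F, #(A i) < κ) : #(⋃ i ∈ F, A i) < κ := by
  classical
  induction F using Finset.induction_on with
  | empty => simpa using aleph0_pos.trans_le hκ
  | insert i F _ ih =>
    rw [Finset.set_biUnion_insert]
    exact (mk_union_le _ _).trans_lt <| add_lt_of_lt hκ (hA i (F.mem_insert_self i)) <|
      ih fun j hj ↦ hA j (Finset.mem_insert_of_mem hj)

theorem mk_iUnion_lt_of_finite_s5 (hκ : ℵ₀ ≤ κ) (hι : #ι < κ) {A : ι → Set α}
    (hA : ∀ i, (A i).Finite) : #(⋃ i, A i) < κ := by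
  rcases finite_or_infinite ι with _ | _
  · exact (finite_iUnion hA).lt_aleph0.trans_le hκ
  · calc #(⋃ i, A i) ≤ #ι * ⨆ i, #(A i) := mk_iUnion_le A
      _ ≤ #ι * ℵ₀ := by gcongr; exact ciSup_le' fun i ↦ (hA i).lt_aleph0.le
      _ = #ι := mul_aleph0_eq (aleph0_le_mk ι)
      _ < κ := hι

end SmallUnions

section TransfiniteChoice

theorem exists_pairwise_of_forall_small {ι α : Type u} {A : ι → Set α} {r : ι → α → ι → α → Prop}
    (hr : ∀ {s a t b}, r s a t b → r t b s a)
    (h : ∀ (t : ι) (S : Set ι), #S < #ι → ∀ f : S → α, ∃ b ∈ A t, ∀ s : S, r s (f s) t b) :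
    ∃ z : ι → α, (∀ t, z t ∈ A t) ∧ Pairwise fun s t ↦ r s (z s) t (z t) := by
  obtain ⟨_, _, hι⟩ := exists_ord_eq_type_lt ι
  choose pick hpick_mem hpick using fun t ↦ h t (Iio t) (mk_Iio_lt t hι)
  let z : ι → α := wellFounded_lt.fix fun t f ↦ pick t fun s ↦ f s s.2
  have hz (t : ι) : z t = pick t fun s ↦ z s := wellFounded_lt.fix_eq _ t
  have hlt {s t : ι} (hst : s < t) : r s (z s) t (z t) := by
    rw [hz t]
    exact hpick t (fun s ↦ z s) ⟨s, hst⟩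
  refine ⟨z, fun t ↦ hz t ▸ hpick_mem t _, fun s t hst ↦ ?_⟩
  exact hst.lt_or_gt.elim hlt fun hts ↦ hr (hlt hts)

variable {X : Type u} [Mul X] [Infinite X]

theorem exists_injOn_mul_right_forall_mul_notMem
    (h1 : ∀ F : Finset X, #{z : X | ∀ x ∈ F, ∀ y ∈ F, x ≠ y → x * z ≠ y * z} = #X)
    (h2 : ∀ P : Set X, #P < #X → ∀ x : X, #{z : X | x * z ∈ P} < #X)
    (F : Finset X) {P : Set X} (hP : #P < #X) :
    ∃ z, InjOn (· * z) (F : Set X) ∧ ∀ x ∈ F, x * z ∉ P := by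
  have hbad : #(⋃ x ∈ F, {z | x * z ∈ P}) < #X :=
    mk_biUnion_finset_lt_s5 (aleph0_le_mk X) F fun x _ ↦ h2 P hP x
  obtain ⟨z, hz, hzP⟩ := not_subset.1 fun hsub ↦ (mk_le_mk_of_subset hsub).not_gt (h1 F ▸ hbad)
  refine ⟨z, fun x hx y hy hxy ↦ ?_, fun x hx hxz ↦ hzP (mem_biUnion hx hxz)⟩
  by_contra hne
  exact hz x hx y hy hne hxy

theorem exists_injOn_mul_family
    (h : ∀ (F : Finset X) (P : Set X), #P < #X →
      ∃ z, InjOn (· * z) (F : Set X) ∧ ∀ x ∈ F, x * z ∉ P)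
    {T : Type u} (hT : #T ≤ #X) (F : T → Finset X) :
    ∃ z : T → X, InjOn (fun u : T × X ↦ u.2 * z u.1) {u | u.2 ∈ F u.1} := by
  obtain ⟨z, hinj, hne⟩ := exists_pairwise_of_forall_small
    (A := fun t ↦ {b | InjOn (· * b) (F t : Set X)})
    (r := fun s a t b ↦ ∀ x ∈ F s, ∀ y ∈ F t, x * a ≠ y * b)
    (fun hr y hy x hx hxy ↦ hr x hx y hy hxy.symm) fun t S hS f ↦ by
      obtain ⟨b, hb, hbP⟩ := h (F t) (⋃ s : S, (· * f s) '' (F s : Set X)) <|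
        mk_iUnion_lt_of_finite_s5 (aleph0_le_mk X) (hS.trans_le hT) fun s ↦
          (F s).finite_toSet.image _
      exact ⟨b, hb, fun s x hx y hy hxy ↦ hbP y hy (mem_iUnion.2 ⟨s, x, hx, hxy⟩)⟩
  refine ⟨z, fun ⟨s, x⟩ hx ⟨t, y⟩ hy hxy ↦ ?_⟩
  obtain rfl : s = t := by
    by_contra hst
    exact hne hst x hx y hy hxy
  obtain rfl : x = y := hinj s hx hy hxy
  rfl

end TransfiniteChoice

/-- The iterated limit formula `lim_{t → q} v t = lim_{x → p} lim_{t → q} (t, x)` in the space of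
ultrafilters on `T × X`, for every ultrafilter `q` finer than `l`. Only one inclusion is required,
since both sides are ultrafilters. -/
def LimitsCommute {T X : Type*} (l : Filter T) (p : Ultrafilter X) (v : T → Ultrafilter (T × X)) :
    Prop :=
  ∀ q : Ultrafilter T, ↑q ≤ l → ∀ L : Set (T × X),
    (∀ᶠ x in p, ∀ᶠ t in q, (t, x) ∈ L) → ∀ᶠ t in q, L ∈ v t

namespace LimitsCommute

variable {T X : Type*} {l : Filter T} {p : Ultrafilter X} {v : T → Ultrafilter (T × X)}

theorem eventually_mem (hv : LimitsCommute l p v) {L : Set (T × X)}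
    (hL : ∀ᶠ x in p, ∀ᶠ t in l, (t, x) ∈ L) : ∀ᶠ t in l, L ∈ v t :=
  mem_iff_ultrafilter.2 fun q hq ↦ hv q hq L <| hL.mono fun _ hx ↦ hx.filter_mono hq

theorem eventually_preimage_fst_mem (hv : LimitsCommute l p v) (K : Set T) :
    ∀ᶠ t in l, t ∈ K → Prod.fst ⁻¹' K ∈ v t := by
  refine mem_iff_ultrafilter.2 fun q hq ↦ Ultrafilter.eventually_imp.2 fun hK ↦ ?_
  exact hv q hq _ <| Eventually.of_forall fun _ ↦ hK

theorem exists_eq_pure_of_frequently (hv : LimitsCommute l p v)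
    (hpure : ∃ᶠ t in l, ∃ x, v t = pure (t, x)) : ∃ x, p = pure x := by
  have := frequently_iff_neBot.1 hpure
  obtain ⟨q, hq⟩ := Ultrafilter.exists_le (l ⊓ 𝓟 {t | ∃ x, v t = pure (t, x)})
  have : Nonempty X := p.neBot.nonempty
  obtain ⟨ξ, hξ⟩ : ∃ ξ : T → X, ∀ᶠ t in q, v t = pure (t, ξ t) :=
    Eventually.choice (le_principal_iff.1 (hq.trans inf_le_right))
  have hlim {L : Set (T × X)} (hL : ∀ᶠ x in p, ∀ᶠ t in q, (t, x) ∈ L) :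
      ∀ᶠ t in q, (t, ξ t) ∈ L := by
    filter_upwards [hv q (hq.trans inf_le_left) L hL, hξ] with t hLt ht
    rwa [ht, Ultrafilter.mem_pure] at hLt
  have hmap : q.map ξ = p := Ultrafilter.eq_of_le fun S hS ↦
    hlim (L := Prod.snd ⁻¹' S) <| mem_of_superset hS fun _ hx ↦ Eventually.of_forall fun _ ↦ hx
  obtain ⟨x, hx⟩ : ∃ x, ∀ᶠ t in q, ξ t = x := by
    by_contra! hne
    have hoff : ∀ᶠ t in q, (t, ξ t) ∈ {u : T × X | ξ u.1 ≠ u.2} :=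
      hlim <| Eventually.of_forall hne
    obtain ⟨t, ht⟩ := hoff.exists
    exact ht rfl
  have hpx : {x} ∈ p := hmap ▸ hx
  obtain ⟨_, rfl, hp⟩ := Ultrafilter.eq_pure_of_finite_mem (finite_singleton x) hpx
  exact ⟨_, hp⟩

end LimitsCommute

theorem frequently_singleton_mem_of_forall_eventually_mem {ι : Type*} [Preorder ι]
    [IsDirectedOrder ι] [Nonempty ι] {w : ι × ι → Filter (ι × ι)}
    (hw : ∀ K : Set (ι × ι), ∀ᶠ t in comap Prod.fst atTop, t ∈ K → K ∈ w t) :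
    ∃ᶠ t in comap Prod.fst atTop, {t} ∈ w t := by
  intro hnot
  have hfibre (e : ι) : ∃ d ≥ e, {t | t.2 = e} ∈ w (d, e) ∧ {(d, e)} ∉ w (d, e) := by
    have hd : Tendsto (fun d : ι ↦ (d, e)) atTop (comap Prod.fst atTop) :=
      tendsto_comap_iff.2 tendsto_id
    obtain ⟨d, hde, hfib, hsing⟩ := ((eventually_ge_atTop e).and <|
      (hd.eventually (hw {t | t.2 = e})).and (hd.eventually hnot)).exists
    exact ⟨d, hde, hfib rfl, hsing⟩
  choose d hd hfib hsing using hfibre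
  -- The diagonal `{(d e, e)}` is cofinal and meets each fibre in a single point.
  let τ (e : ι) : ι × ι := (d e, e)
  have hτ : Tendsto τ atTop (comap Prod.fst atTop) :=
    tendsto_comap_iff.2 (tendsto_atTop_mono hd tendsto_id)
  obtain ⟨e, he⟩ := (hτ.eventually (hw (range τ))).exists
  refine hsing e (mem_of_superset (inter_mem (he (mem_range_self e)) (hfib e)) ?_)
  rintro _ ⟨⟨e', rfl⟩, rfl : e' = e⟩
  rfl

theorem eventually_mem_fst {α β : Type*} (a : α) :
    ∀ᶠ t : Finset α × β in comap Prod.fst atTop, a ∈ t.1 :=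
  (tendsto_comap.eventually (eventually_ge_atTop {a})).mono fun _ ↦ Finset.singleton_subset_iff.1

theorem LimitsCommute.exists_eq_pure {X : Type*} {p : Ultrafilter X}
    {v : Finset X × Finset X → Ultrafilter ((Finset X × Finset X) × X)}
    (hv : LimitsCommute (comap Prod.fst atTop) p v) : ∃ x, p = pure x := by
  refine hv.exists_eq_pure_of_frequently ?_
  have hfst : ∃ᶠ t in comap Prod.fst atTop, Prod.fst ⁻¹' {t} ∈ v t :=
    frequently_singleton_mem_of_forall_eventually_mem
      (w := fun t ↦ (v t).map Prod.fst) hv.eventually_preimage_fst_mem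
  have hsnd : ∀ᶠ t in comap Prod.fst atTop, {u : (Finset X × Finset X) × X | u.2 ∈ u.1.1} ∈ v t :=
    hv.eventually_mem (Eventually.of_forall eventually_mem_fst)
  refine (hfst.and_eventually hsnd).mono fun t ⟨ht, hmem⟩ ↦ ?_
  have hfin : (Prod.mk t '' (t.1 : Set X)).Finite := t.1.finite_toSet.image _
  have hsupp : Prod.mk t '' (t.1 : Set X) ∈ v t := by
    filter_upwards [ht, hmem]
    rintro ⟨_, x⟩ rfl hx
    exact ⟨x, hx, rfl⟩
  obtain ⟨_, ⟨x, -, rfl⟩, hx⟩ := Ultrafilter.eq_pure_of_finite_mem hfin hsupp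
  exact ⟨x, hx⟩

section TopologicalCentre

variable {X : Type u} [Mul X]

theorem continuous_pure_mul (x : X) : Continuous ((pure x : Ultrafilter X) * ·) :=
  ultrafilterBasis_is_basis.continuous_iff.2 <| forall_mem_range.2 fun A ↦
    ultrafilter_isOpen_basic {y | x * y ∈ A}

theorem eventually_comm_of_continuous_mul {p : Ultrafilter X} (hp : Continuous (p * ·))
    (q : Ultrafilter X) {A : Set X} (hA : ∀ᶠ x in p, ∀ᶠ y in q, x * y ∈ A) :
    ∀ᶠ y in q, ∀ᶠ x in p, x * y ∈ A :=
  -- The ultrafilter `q` is the limit of the points `y`, and `p * pure y` is the image of `p`.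
  (hp.tendsto q).comp q.tendsto_pure_self |>.eventually <|
    (ultrafilter_isOpen_basic A).mem_nhds hA

theorem limitsCommute_of_continuous_mul {p : Ultrafilter X} (hp : Continuous (p * ·))
    {T : Type*} {l : Filter T} {z : T → X} {d : X → T × X}
    (hd : ∀ x, ∀ᶠ t in l, d (x * z t) = (t, x)) :
    LimitsCommute l p fun t ↦ p.map fun x ↦ d (x * z t) := by
  intro q hq L hL
  refine eventually_comm_of_continuous_mul hp (q.map z) (A := d ⁻¹' L) (hL.mono fun x hx ↦ ?_)
  refine eventually_map.2 ?_
  filter_upwards [hx, (hd x).filter_mono hq] with t ht hdt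
  rwa [mem_preimage, hdt]

theorem exists_eq_pure_of_continuous_mul {p : Ultrafilter X} (hp : Continuous (p * ·))
    {z : Finset X × Finset X → X}
    (hz : InjOn (fun u : (Finset X × Finset X) × X ↦ u.2 * z u.1) {u | u.2 ∈ u.1.1}) :
    ∃ x, p = pure x := by
  have : Nonempty X := p.neBot.nonempty
  have hd : ∀ x, ∀ᶠ t in comap Prod.fst atTop, invFunOn _ _ (x * z t) = (t, x) := fun x ↦ by
    filter_upwards [eventually_mem_fst x] with t ht
    exact hz.leftInvOn_invFunOn (x := (t, x)) ht
  exact (limitsCommute_of_continuous_mul hp hd).exists_eq_pure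

theorem stmt5_general
    (h1 : ∀ F : Finset X, #{z : X | ∀ x ∈ F, ∀ y ∈ F, x ≠ y → x * z ≠ y * z} = #X)
    (h2 : ∀ P : Set X, #P < #X → ∀ x : X, #{z : X | x * z ∈ P} < #X) (p : Ultrafilter X) :
    Continuous (p * ·) ↔ ∃ x : X, p = pure x := by
  refine ⟨fun hp ↦ ?_, fun ⟨x, hx⟩ ↦ hx ▸ continuous_pure_mul x⟩
  rcases finite_or_infinite X with _ | _
  · exact p.eq_pure_of_finite
  have hcard : #(Finset X × Finset X) ≤ #X := by simp
  obtain ⟨z, hz⟩ := exists_injOn_mul_family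
    (fun F _ hP ↦ exists_injOn_mul_right_forall_mul_notMem h1 h2 F hP) hcard Prod.fst
  exact exists_eq_pure_of_continuous_mul hp hz

end TopologicalCentre

/-- For an infinite semigroup satisfying (1) and (2), the topological centre of the
semigroup of ultrafilters (with the Hindman--Strauss operation) is exactly the set of
principal ultrafilters. -/
theorem stmt5 {X : Type*} [Semigroup X] [Infinite X]
    (h1 : ∀ F : Finset X,
      #{z : X | ∀ x ∈ F, ∀ y ∈ F, x ≠ y → x * z ≠ y * z} = #X)
    (h2 : ∀ P : Set X, #↥P < #X → ∀ x : X, #{z : X | x * z ∈ P} < #X)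
    (mul : Ultrafilter X → Ultrafilter X → Ultrafilter X)
    (hmul : ∀ p q : Ultrafilter X, ∀ A : Set X,
      A ∈ mul p q ↔ {x : X | {y : X | x * y ∈ A} ∈ q} ∈ p)
    (p : Ultrafilter X) :
    Continuous (mul p) ↔ ∃ x : X, p = pure x := by
  have h : mul p = (p * ·) := funext fun q ↦ Ultrafilter.ext fun A ↦ hmul p q A
  exact h ▸ stmt5_general h1 h2 p
end

section
/- Let X be a semigroup acting on a set Y (both discrete) via m : X × Y → Y with m(s, m(s', y)) = m(ss', y). If μ ∈ M(X) is ℓ¹-representable, then the mapping ν ↦ μ⋆ν from M(Y) to itself is continuous for the weak* topologies. -/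
open BoundedContinuousFunction NormedSpace

section ConvDefs

variable {X Y Z : Type*} [TopologicalSpace X] [DiscreteTopology X]
  [TopologicalSpace Y] [DiscreteTopology Y] [TopologicalSpace Z] [DiscreteTopology Z]

/-- The inner integral: `x ↦ ν (y ↦ f (p x y))`, as a bounded function on `X`. -/
noncomputable def innerConv (p : X → Y → Z) (ν : StrongDual ℝ (Y →ᵇ ℝ)) (f : Z →ᵇ ℝ) : X →ᵇ ℝ :=
  BoundedContinuousFunction.ofNormedAddCommGroup
    (fun x => ν (f.compContinuous ⟨fun y => p x y, continuous_of_discreteTopology⟩))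
    continuous_of_discreteTopology (‖ν‖ * ‖f‖)
    (fun x => by
      calc ‖ν (f.compContinuous ⟨fun y => p x y, continuous_of_discreteTopology⟩)‖
          ≤ ‖ν‖ * ‖f.compContinuous ⟨fun y => p x y, continuous_of_discreteTopology⟩‖ :=
            ν.le_opNorm _
        _ ≤ ‖ν‖ * ‖f‖ := by
            gcongr
            exact f.norm_compContinuous_le _)

/-- The convolution `μ ⋆ ν` along the map `p`:
`(μ ⋆ ν) f = μ (x ↦ ν (y ↦ f (p x y)))`. -/
noncomputable def convMap (p : X → Y → Z) (μ : StrongDual ℝ (X →ᵇ ℝ)) (ν : StrongDual ℝ (Y →ᵇ ℝ)) :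
    StrongDual ℝ (Z →ᵇ ℝ) :=
  LinearMap.mkContinuous
    { toFun := fun f => μ (innerConv p ν f)
      map_add' := fun f g => by
        rw [← map_add]
        refine congrArg μ ?_
        ext x
        simp only [innerConv, coe_ofNormedAddCommGroup, coe_add, Pi.add_apply]
        exact map_add ν (f.compContinuous _) (g.compContinuous _)
      map_smul' := fun c f => by
        simp only [RingHom.id_apply]
        rw [← map_smul]
        refine congrArg μ ?_
        ext x
        simp only [innerConv, coe_ofNormedAddCommGroup, coe_smul, Pi.smul_apply]
        exact map_smul ν c (f.compContinuous _) }
    (‖μ‖ * ‖ν‖)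
    (fun f => by
      calc ‖μ (innerConv p ν f)‖ ≤ ‖μ‖ * ‖innerConv p ν f‖ := μ.le_opNorm _
        _ ≤ ‖μ‖ * (‖ν‖ * ‖f‖) := by
            gcongr
            exact norm_ofNormedAddCommGroup_le _
                (mul_nonneg (norm_nonneg ν) (norm_nonneg f)) _
        _ = ‖μ‖ * ‖ν‖ * ‖f‖ := by ring)

/-- `μ` is representable by an absolutely summable family (an element of `ℓ¹(X)`). -/
def L1Rep (μ : StrongDual ℝ (X →ᵇ ℝ)) : Prop :=
  ∃ g : X → ℝ, Summable (fun x => |g x|) ∧ ∀ f : X →ᵇ ℝ, μ f = ∑' x, g x * f x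

/-- A functional is positive if it is nonnegative on nonnegative functions. -/
def PosFunc (μ : StrongDual ℝ (X →ᵇ ℝ)) : Prop :=
  ∀ f : X →ᵇ ℝ, (∀ x, 0 ≤ f x) → 0 ≤ μ f

end ConvDefs

/-!
If `μ` is represented by `g ∈ ℓ¹(X)`, then `ν` passes through the norm-convergent series
`(μ ⋆ ν) f = ∑ g x • ν (f ∘ p x) = ν (∑ g x • (f ∘ p x))`. So `ν ↦ μ ⋆ ν` is the transpose of the
bounded operator `f ↦ ∑ g x • (f ∘ p x)`, and transposes are weak*-continuous.
-/

theorem continuous_toWeakDual_comp {𝕜 E F : Type*} [CommSemiring 𝕜] [TopologicalSpace 𝕜]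
    [ContinuousAdd 𝕜] [ContinuousConstSMul 𝕜 𝕜] [AddCommMonoid E] [Module 𝕜 E]
    [TopologicalSpace E] [AddCommMonoid F] [Module 𝕜 F] [TopologicalSpace F] (T : E →L[𝕜] F) :
    Continuous fun ν : WeakDual 𝕜 F => StrongDual.toWeakDual (WeakDual.toStrongDual ν ∘L T) :=
  WeakDual.continuous_of_continuous_eval fun e => WeakDual.eval_continuous (T e)

section WeightedPullback

variable {ι Y Z 𝕜 E : Type*} [TopologicalSpace Y] [TopologicalSpace Z]
  [NontriviallyNormedField 𝕜] [NormedAddCommGroup E] [NormedSpace 𝕜 E]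

/-- The operator `f ↦ ∑ i, g i • (f ∘ φ i)` on bounded continuous functions, whose transpose is
convolution by the `ℓ¹` weights `g`. The series is taken in operator norm, and the value is `0` if
it is not summable there. -/
noncomputable def weightedPullback (g : ι → 𝕜) (φ : ι → C(Y, Z)) : (Z →ᵇ E) →L[𝕜] (Y →ᵇ E) :=
  ∑' i, g i • compContinuousCLM E 𝕜 (φ i)

theorem summable_smul_compContinuousCLM [CompleteSpace E] {g : ι → 𝕜}
    (hg : Summable fun i => ‖g i‖) (φ : ι → C(Y, Z)) :
    Summable fun i => g i • compContinuousCLM E 𝕜 (φ i) := by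
  refine .of_norm_bounded hg fun i => ?_
  have norm_le_one : ‖compContinuousCLM E 𝕜 (φ i)‖ ≤ 1 :=
    LinearMap.mkContinuous_norm_le _ zero_le_one _
  rw [norm_smul]
  exact mul_le_of_le_one_right (norm_nonneg _) norm_le_one

theorem hasSum_apply_weightedPullback [CompleteSpace E] {g : ι → 𝕜}
    (hg : Summable fun i => ‖g i‖) (φ : ι → C(Y, Z)) (ν : StrongDual 𝕜 (Y →ᵇ E)) (f : Z →ᵇ E) :
    HasSum (fun i => g i * ν (f.compContinuous (φ i))) (ν (weightedPullback g φ f)) := by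
  have hasSum_pullback :
      HasSum (fun i => g i • f.compContinuous (φ i)) (weightedPullback g φ f) :=
    (summable_smul_compContinuousCLM hg φ).hasSum.mapL (ContinuousLinearMap.apply 𝕜 _ f)
  simpa only [map_smul, smul_eq_mul] using hasSum_pullback.mapL ν

end WeightedPullback

section Convolution

variable {X Y Z : Type*} [TopologicalSpace X] [DiscreteTopology X]
  [TopologicalSpace Y] [DiscreteTopology Y] [TopologicalSpace Z]

theorem innerConv_apply (p : X → Y → Z) (ν : StrongDual ℝ (Y →ᵇ ℝ)) (f : Z →ᵇ ℝ) (x : X) :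
    innerConv p ν f x = ν (f.compContinuous (ContinuousMap.equivFnOfDiscrete.symm (p x))) :=
  rfl

theorem convMap_apply (p : X → Y → Z) (μ : StrongDual ℝ (X →ᵇ ℝ)) (ν : StrongDual ℝ (Y →ᵇ ℝ))
    (f : Z →ᵇ ℝ) : convMap p μ ν f = μ (innerConv p ν f) :=
  rfl

theorem convMap_eq_comp_weightedPullback (p : X → Y → Z) {μ : StrongDual ℝ (X →ᵇ ℝ)} {g : X → ℝ}
    (hg : Summable fun x => |g x|) (hμ : ∀ f : X →ᵇ ℝ, μ f = ∑' x, g x * f x)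
    (ν : StrongDual ℝ (Y →ᵇ ℝ)) :
    convMap p μ ν =
      ν ∘L weightedPullback g fun x => ContinuousMap.equivFnOfDiscrete.symm (p x) := by
  ext f
  calc convMap p μ ν f
      = ∑' x, g x * ν (f.compContinuous (ContinuousMap.equivFnOfDiscrete.symm (p x))) := by
        simp only [convMap_apply, hμ, innerConv_apply]
    _ = ν (weightedPullback g (fun x => ContinuousMap.equivFnOfDiscrete.symm (p x)) f) :=
        (hasSum_apply_weightedPullback (𝕜 := ℝ) hg _ ν f).tsum_eq

theorem stmt8_general (p : X → Y → Z) {μ : StrongDual ℝ (X →ᵇ ℝ)} (hμ : L1Rep μ) :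
    Continuous fun ν : WeakDual ℝ (Y →ᵇ ℝ) =>
      StrongDual.toWeakDual (convMap p μ (WeakDual.toStrongDual ν)) := by
  obtain ⟨g, hg, hrep⟩ := hμ
  simp only [convMap_eq_comp_weightedPullback p hg hrep]
  exact continuous_toWeakDual_comp _

end Convolution

/-- If `μ` is `ℓ¹`-representable then `ν ↦ μ ⋆ ν` is weak*-weak* continuous. -/
theorem stmt8 {X Y : Type*} [Semigroup X] [TopologicalSpace X] [DiscreteTopology X]
    [TopologicalSpace Y] [DiscreteTopology Y]
    (m : X × Y → Y) (hm : ∀ s s' : X, ∀ y : Y, m (s, m (s', y)) = m (s * s', y))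
    (μ : StrongDual ℝ (X →ᵇ ℝ)) (hμ : L1Rep μ) :
    Continuous fun ν : WeakDual ℝ (Y →ᵇ ℝ) =>
      StrongDual.toWeakDual (convMap (fun x y => m (x, y)) μ (WeakDual.toStrongDual ν)) :=
  stmt8_general (fun x y => m (x, y)) hμ
end

section
/- Let X be a semigroup acting on a set Y (both discrete) via m : X × Y → Y with m(s, m(s', y)) = m(ss', y). If (μ_n) is a sequence of ℓ¹-representable elements of M(X) converging in the weak* topology to an ℓ¹-representable μ ∈ M(X), and (ν_n) is a sequence of ℓ¹-representable elements of M(Y) converging in the weak* topology to an ℓ¹-representable ν ∈ M(Y), then μ_n⋆ν_n converges to μ⋆ν in the weak* topology of M(Y). -/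
open BoundedContinuousFunction NormedSpace

open Filter

/-!
A sequence `ν_n` of `ℓ¹`-representable functionals that converges pointwise on all bounded functions
is norm convergent: by Schur's theorem for the differences `ν_n - ν_k` it is norm Cauchy, and its
norm limit must be its pointwise limit. Hence the inner integrals `x ↦ ν_n (y ↦ f (p x y))` converge
uniformly in `x`, and the weak* convergent sequence `μ_n`, being norm bounded by Banach–Steinhaus,
may be evaluated along a norm convergent sequence.

Schur's theorem is obtained from Baire's theorem on the compact cube `[-1, 1]^Y`, which works for
uncountable `Y` and makes the gliding hump argument unnecessary.
-/

open Topology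

section Schur

variable {ι Y : Type*} {l : Filter ι} [l.IsCountablyGenerated]

theorem exists_isOpen_eventually_subset_of_isClosed {X : Type*} [TopologicalSpace X] [BaireSpace X]
    [Nonempty X] {C : ι → Set X} (hC : ∀ i, IsClosed (C i)) (hmem : ∀ x, ∀ᶠ i in l, x ∈ C i) :
    ∃ U : Set X, IsOpen U ∧ U.Nonempty ∧ ∀ᶠ i in l, U ⊆ C i := by
  obtain ⟨s, hs⟩ := l.exists_antitone_basis
  have hclosed : ∀ n, IsClosed (⋂ i ∈ s n, C i) := fun n => isClosed_biInter fun i _ => hC i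
  have hcover : ⋃ n, ⋂ i ∈ s n, C i = Set.univ := by
    refine Set.eq_univ_of_forall fun x => ?_
    obtain ⟨n, -, hn⟩ := hs.1.eventually_iff.1 (hmem x)
    exact Set.mem_iUnion.2 ⟨n, Set.mem_iInter₂.2 fun i hi => hn hi⟩
  obtain ⟨n, hn⟩ := nonempty_interior_of_iUnion_of_closed hclosed hcover
  refine ⟨_, isOpen_interior, hn, hs.1.eventually_iff.2 ⟨n, trivial, fun i hi => ?_⟩⟩
  exact interior_subset.trans (Set.biInter_subset_of_mem hi)

theorem exists_finset_eventually_mem_of_eqOn {X : Y → Type*} [∀ y, TopologicalSpace (X y)]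
    [BaireSpace (∀ y, X y)] [Nonempty (∀ y, X y)] {C : ι → Set (∀ y, X y)}
    (hC : ∀ i, IsClosed (C i)) (hmem : ∀ x, ∀ᶠ i in l, x ∈ C i) :
    ∃ (s : Finset Y) (x₀ : ∀ y, X y), ∀ᶠ i in l, ∀ x, (∀ y ∈ s, x y = x₀ y) → x ∈ C i := by
  obtain ⟨U, hU, ⟨x₀, hx₀⟩, hUC⟩ := exists_isOpen_eventually_subset_of_isClosed hC hmem
  obtain ⟨s, V, hV, hVU⟩ := isOpen_pi_iff.1 hU x₀ hx₀
  refine ⟨s, x₀, hUC.mono fun i hi x hx => hi (hVU fun y hy => ?_)⟩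
  exact (hx y hy).symm ▸ (hV y hy).2

theorem summable_mul_of_abs_le {g f : Y → ℝ} {C : ℝ} (hg : Summable fun y => |g y|)
    (hf : ∀ y, |f y| ≤ C) : Summable fun y => g y * f y :=
  (hg.mul_right C).of_norm_bounded fun y => norm_mul_le_of_le le_rfl (hf y)

theorem continuous_tsum_mul_cube {g : Y → ℝ} (hg : Summable fun y => |g y|) :
    Continuous fun f : Y → Set.Icc (-1 : ℝ) 1 => ∑' y, g y * (f y : ℝ) := by
  refine continuous_tsum (fun y => by fun_prop) (hg.mul_right 1) fun y f => ?_
  exact norm_mul_le_of_le le_rfl (abs_le.2 (f y).2)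

theorem exists_eqOn_tsum_abs_le {g : Y → ℝ} (hg : Summable fun y => |g y|) (s : Finset Y)
    (f₀ : Y → Set.Icc (-1 : ℝ) 1) :
    ∃ f : Y → Set.Icc (-1 : ℝ) 1, (∀ y ∈ s, f y = f₀ y) ∧
      ∑' y, |g y| ≤ ∑' y, g y * (f y : ℝ) + 2 * ∑ y ∈ s, |g y| := by
  classical
  let sgn (y : Y) : Set.Icc (-1 : ℝ) 1 :=
    ⟨SignType.sign (g y), by rcases SignType.sign (g y) with _ | _ | _ <;> norm_num⟩
  let f := s.piecewise f₀ sgn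
  have habs (y : Y) : |(f y : ℝ)| ≤ 1 := abs_le.2 (f y).2
  have hpointwise (y : Y) :
      |g y| ≤ g y * (f y : ℝ) + 2 * (s : Set Y).indicator (fun y => |g y|) y := by
    by_cases hy : y ∈ s
    · have : -|g y| ≤ g y * (f y : ℝ) := by
        refine neg_le_of_abs_le ?_
        rw [abs_mul]
        exact mul_le_of_le_one_right (abs_nonneg _) (habs y)
      rw [Set.indicator_of_mem (Finset.mem_coe.2 hy)]
      linarith
    · simp [f, sgn, hy]
  have hindicator : HasSum ((s : Set Y).indicator fun y => |g y|) (∑ y ∈ s, |g y|) :=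
    hasSum_subtype_iff_indicator.1 (s.hasSum _)
  exact ⟨f, fun y hy => s.piecewise_eq_of_mem _ _ hy, hasSum_le hpointwise hg.hasSum
    ((summable_mul_of_abs_le hg habs).hasSum.add (hindicator.mul_left 2))⟩

theorem tendsto_tsum_abs_of_forall_tendsto_tsum_mul {h : ι → Y → ℝ}
    (hs : ∀ i, Summable fun y => |h i y|)
    (H : ∀ f : Y → ℝ, (∀ y, |f y| ≤ 1) → Tendsto (fun i => ∑' y, h i y * f y) l (𝓝 0)) :
    Tendsto (fun i => ∑' y, |h i y|) l (𝓝 0) := by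
  classical
  have hcoord (y : Y) : Tendsto (fun i => h i y) l (𝓝 0) := by
    have := H (Pi.single y 1) fun z => by by_cases hz : z = y <;> simp [hz]
    simpa [Pi.single_apply] using this
  refine Metric.tendsto_nhds.2 fun ε hε => ?_
  have hclosed (i : ι) :
      IsClosed {f : Y → Set.Icc (-1 : ℝ) 1 | |∑' y, h i y * (f y : ℝ)| ≤ ε / 2} :=
    isClosed_le (continuous_tsum_mul_cube (hs i)).abs continuous_const
  have hmem (f : Y → Set.Icc (-1 : ℝ) 1) : ∀ᶠ i in l, |∑' y, h i y * (f y : ℝ)| ≤ ε / 2 := by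
    have := (H _ fun y => abs_le.2 (f y).2).abs
    rw [abs_zero] at this
    exact this.eventually_le_const (half_pos hε)
  have : Nonempty (Y → Set.Icc (-1 : ℝ) 1) := ⟨fun _ => ⟨0, by norm_num⟩⟩
  obtain ⟨s, f₀, hsmall⟩ := exists_finset_eventually_mem_of_eqOn hclosed hmem
  have hfinite : Tendsto (fun i => 2 * ∑ y ∈ s, |h i y|) l (𝓝 0) := by
    simpa using (tendsto_finsetSum s fun y _ => (hcoord y).abs).const_mul 2
  filter_upwards [hsmall, hfinite.eventually_lt_const (half_pos hε)] with i hi hlt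
  obtain ⟨f, hf, hle⟩ := exists_eqOn_tsum_abs_le (hs i) s f₀
  have hpairing : ∑' y, h i y * (f y : ℝ) ≤ ε / 2 := le_of_abs_le (hi f hf)
  rw [Real.dist_0_eq_abs, abs_of_nonneg (tsum_nonneg fun y => abs_nonneg _)]
  linarith

end Schur

namespace L1Rep

variable {Y : Type*} [TopologicalSpace Y]

theorem sub {μ ν : StrongDual ℝ (Y →ᵇ ℝ)} (hμ : L1Rep μ) (hν : L1Rep ν) : L1Rep (μ - ν) := by
  obtain ⟨g, hg, hμg⟩ := hμ
  obtain ⟨k, hk, hνk⟩ := hν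
  refine ⟨fun y => g y - k y, (hg.add hk).of_nonneg_of_le (fun y => abs_nonneg _)
    fun y => abs_sub _ _, fun f => ?_⟩
  have hgf := summable_mul_of_abs_le hg f.norm_coe_le_norm
  have hkf := summable_mul_of_abs_le hk f.norm_coe_le_norm
  simp only [sub_mul, hgf.tsum_sub hkf, _root_.sub_apply, hμg, hνk]

theorem norm_le_tsum_abs {μ : StrongDual ℝ (Y →ᵇ ℝ)} {g : Y → ℝ} (hg : Summable fun y => |g y|)
    (hμ : ∀ f : Y →ᵇ ℝ, μ f = ∑' y, g y * f y) : ‖μ‖ ≤ ∑' y, |g y| := by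
  refine μ.opNorm_le_bound (tsum_nonneg fun y => abs_nonneg _) fun f => ?_
  rw [hμ]
  exact tsum_of_norm_bounded (hg.hasSum.mul_right ‖f‖) fun y =>
    norm_mul_le_of_le le_rfl (f.norm_coe_le_norm y)

variable [DiscreteTopology Y]

theorem tendsto_norm_zero {ι : Type*} {l : Filter ι} [l.IsCountablyGenerated]
    {ρ : ι → StrongDual ℝ (Y →ᵇ ℝ)} (hρ : ∀ i, L1Rep (ρ i))
    (hlim : ∀ f, Tendsto (fun i => ρ i f) l (𝓝 0)) : Tendsto (fun i => ‖ρ i‖) l (𝓝 0) := by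
  choose g hg hρg using hρ
  have htsum : Tendsto (fun i => ∑' y, |g i y|) l (𝓝 0) := by
    refine tendsto_tsum_abs_of_forall_tendsto_tsum_mul hg fun f hf => ?_
    simpa [hρg] using hlim (.ofNormedAddCommGroup f continuous_of_discreteTopology 1 hf)
  exact squeeze_zero (fun i => norm_nonneg (ρ i)) (fun i => norm_le_tsum_abs (hg i) (hρg i)) htsum

variable {β : Type*} [Nonempty β] [SemilatticeSup β] [(atTop : Filter β).IsCountablyGenerated]
  {νseq : β → StrongDual ℝ (Y →ᵇ ℝ)}

theorem cauchySeq (hνseq : ∀ n, L1Rep (νseq n)) (hcauchy : ∀ f, CauchySeq fun n => νseq n f) :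
    CauchySeq νseq := by
  have : (atTop : Filter (β × β)).IsCountablyGenerated := by
    rw [← prod_atTop_atTop_eq]
    infer_instance
  have hdiff (f : Y →ᵇ ℝ) :
      Tendsto (fun n : β × β => (νseq n.1 - νseq n.2) f) atTop (𝓝 0) :=
    tendsto_zero_iff_norm_tendsto_zero.2 (cauchySeq_iff_tendsto_dist_atTop_0.1 (hcauchy f))
  have hnorm : Tendsto (fun n : β × β => ‖νseq n.1 - νseq n.2‖) atTop (𝓝 0) :=
    tendsto_norm_zero (fun n => (hνseq n.1).sub (hνseq n.2)) hdiff
  exact (cauchySeq_iff_tendsto_dist_atTop_0 (u := νseq)).2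
    (hnorm.congr fun n => (dist_eq_norm (νseq n.1) (νseq n.2)).symm)

theorem tendsto_of_forall_tendsto_apply {ν : StrongDual ℝ (Y →ᵇ ℝ)}
    (hνseq : ∀ n, L1Rep (νseq n)) (hlim : ∀ f, Tendsto (fun n => νseq n f) atTop (𝓝 (ν f))) :
    Tendsto νseq atTop (𝓝 ν) := by
  obtain ⟨ν', hν'⟩ := cauchySeq_tendsto_of_complete (cauchySeq hνseq fun f => (hlim f).cauchySeq)
  have : ν' = ν := ContinuousLinearMap.ext fun f =>
    tendsto_nhds_unique (((ContinuousLinearMap.apply ℝ ℝ f).continuous.tendsto ν').comp hν')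
      (hlim f)
  rwa [← this]

end L1Rep

theorem tendsto_apply_of_forall_tendsto_apply {𝕜 E F : Type*} [NontriviallyNormedField 𝕜]
    [SeminormedAddCommGroup E] [NormedSpace 𝕜 E] [CompleteSpace E] [SeminormedAddCommGroup F]
    [NormedSpace 𝕜 F] {T : ℕ → E →L[𝕜] F} {T₀ : E →L[𝕜] F} {u : ℕ → E} {u₀ : E}
    (hT : ∀ x, Tendsto (fun n => T n x) atTop (𝓝 (T₀ x))) (hu : Tendsto u atTop (𝓝 u₀)) :
    Tendsto (fun n => T n (u n)) atTop (𝓝 (T₀ u₀)) := by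
  obtain ⟨C, hC⟩ : ∃ C, ∀ n, ‖T n‖ ≤ C := banach_steinhaus fun x =>
    let ⟨C, hC⟩ := (hT x).norm.bddAbove_range
    ⟨C, fun n => hC ⟨n, rfl⟩⟩
  have hdiff : Tendsto (fun n => T n (u n - u₀)) atTop (𝓝 0) := by
    refine squeeze_zero_norm (fun n => (T n).le_of_opNorm_le (hC n) _) ?_
    simpa using (tendsto_iff_norm_sub_tendsto_zero.1 hu).const_mul C
  simpa using hdiff.add (hT u₀)

section Convolution

variable {X Y Z : Type*} [TopologicalSpace X] [DiscreteTopology X]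
  [TopologicalSpace Y] [DiscreteTopology Y] [TopologicalSpace Z]

theorem norm_innerConv_le (p : X → Y → Z) (ν : StrongDual ℝ (Y →ᵇ ℝ)) (f : Z →ᵇ ℝ) :
    ‖innerConv p ν f‖ ≤ ‖ν‖ * ‖f‖ :=
  norm_ofNormedAddCommGroup_le _ (by positivity) _

theorem innerConv_sub (p : X → Y → Z) (ν₁ ν₂ : StrongDual ℝ (Y →ᵇ ℝ)) (f : Z →ᵇ ℝ) :
    innerConv p (ν₁ - ν₂) f = innerConv p ν₁ f - innerConv p ν₂ f :=
  rfl

theorem continuous_innerConv (p : X → Y → Z) (f : Z →ᵇ ℝ) :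
    Continuous fun ν : StrongDual ℝ (Y →ᵇ ℝ) => innerConv p ν f := by
  have hlipschitz : LipschitzWith ‖f‖₊ fun ν : StrongDual ℝ (Y →ᵇ ℝ) => innerConv p ν f := by
    refine LipschitzWith.of_dist_le_mul fun ν₁ ν₂ => ?_
    rw [dist_eq_norm, dist_eq_norm, ← innerConv_sub, mul_comm]
    exact norm_innerConv_le p _ f
  exact hlipschitz.continuous

theorem stmt9_general (p : X → Y → Z)
    {μseq : ℕ → StrongDual ℝ (X →ᵇ ℝ)} {μ : StrongDual ℝ (X →ᵇ ℝ)}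
    {νseq : ℕ → StrongDual ℝ (Y →ᵇ ℝ)} {ν : StrongDual ℝ (Y →ᵇ ℝ)}
    (hνseq : ∀ n, L1Rep (νseq n))
    (hμlim : Tendsto (fun n => StrongDual.toWeakDual (μseq n)) atTop
      (𝓝 (StrongDual.toWeakDual μ)))
    (hνlim : Tendsto (fun n => StrongDual.toWeakDual (νseq n)) atTop
      (𝓝 (StrongDual.toWeakDual ν))) :
    Tendsto (fun n => StrongDual.toWeakDual (convMap p (μseq n) (νseq n))) atTop
      (𝓝 (StrongDual.toWeakDual (convMap p μ ν))) := by
  rw [tendsto_iff_forall_eval_tendsto_topDualPairing] at hμlim hνlim ⊢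
  intro f
  have hνnorm : Tendsto νseq atTop (𝓝 ν) := L1Rep.tendsto_of_forall_tendsto_apply hνseq hνlim
  have hinner : Tendsto (fun n => innerConv p (νseq n) f) atTop (𝓝 (innerConv p ν f)) :=
    ((continuous_innerConv p f).tendsto ν).comp hνnorm
  exact tendsto_apply_of_forall_tendsto_apply (T := μseq) (T₀ := μ) hμlim hinner

end Convolution

/-- Joint sequential weak* continuity of convolution on `ℓ¹`-representable functionals. -/
theorem stmt9 {X Y : Type*} [Semigroup X] [TopologicalSpace X] [DiscreteTopology X]
    [TopologicalSpace Y] [DiscreteTopology Y]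
    (m : X × Y → Y) (hm : ∀ s s' : X, ∀ y : Y, m (s, m (s', y)) = m (s * s', y))
    (μseq : ℕ → StrongDual ℝ (X →ᵇ ℝ)) (μ : StrongDual ℝ (X →ᵇ ℝ))
    (νseq : ℕ → StrongDual ℝ (Y →ᵇ ℝ)) (ν : StrongDual ℝ (Y →ᵇ ℝ))
    (hμseq : ∀ n, L1Rep (μseq n)) (hμ : L1Rep μ)
    (hνseq : ∀ n, L1Rep (νseq n)) (hν : L1Rep ν)
    (hμlim : Tendsto (fun n => StrongDual.toWeakDual (μseq n)) atTop (nhds (StrongDual.toWeakDual μ)))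
    (hνlim : Tendsto (fun n => StrongDual.toWeakDual (νseq n)) atTop (nhds (StrongDual.toWeakDual ν))) :
    Tendsto (fun n => StrongDual.toWeakDual (convMap (fun x y => m (x, y)) (μseq n) (νseq n)))
      atTop (nhds (StrongDual.toWeakDual (convMap (fun x y => m (x, y)) μ ν))) :=
  stmt9_general _ hνseq hμlim hνlim
end

section
/- Let X be a semigroup with the discrete topology and let f ∈ U_b(X). Define φ(ν) = (x ↦ ν(y ↦ f(xy))) for ν ∈ K. Then (i) φ is continuous from K (with the weak* topology) to the product space ℝ^X, and (ii) the image φ(K) equals the closure in ℝ^X of the right orbit of f. -/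
open BoundedContinuousFunction NormedSpace

/-!
The evaluation functionals lie in the unit ball of the dual, so by Banach–Alaoglu their weak*
closure `K` is compact. Every coordinate of `φ` is evaluation of a functional at a fixed function,
hence `φ` is weak* continuous. A continuous map into a Hausdorff space carries a compact closure
onto the closure of the image, and `φ(δ_y)` is the right translate of `f` by `y`.
-/

theorem continuous_weakDual_apply_family {𝕜 E ι : Type*} [CommSemiring 𝕜] [TopologicalSpace 𝕜]
    [ContinuousAdd 𝕜] [ContinuousConstSMul 𝕜 𝕜] [AddCommMonoid E] [Module 𝕜 E]
    [TopologicalSpace E] (F : ι → E) : Continuous fun (ν : WeakDual 𝕜 E) i => ν (F i) :=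
  continuous_pi fun i => WeakDual.eval_continuous (F i)

theorem isCompact_closure_of_isBounded_weakDual {𝕜 E : Type*} [NontriviallyNormedField 𝕜]
    [ProperSpace 𝕜] [SeminormedAddCommGroup E] [NormedSpace 𝕜 E] {s : Set (WeakDual 𝕜 E)}
    (hs : Bornology.IsBounded s) : IsCompact (closure s) :=
  WeakDual.isCompact_of_bounded_of_closed (WeakDual.isBounded_closure hs) isClosed_closure

theorem norm_evalCLM_le_one (𝕜 : Type*) {X E : Type*} [NontriviallyNormedField 𝕜]
    [TopologicalSpace X] [SeminormedAddCommGroup E] [NormedSpace 𝕜 E] (x : X) :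
    ‖(evalCLM 𝕜 x : (X →ᵇ E) →L[𝕜] E)‖ ≤ 1 :=
  ContinuousLinearMap.opNorm_le_bound _ zero_le_one fun g =>
    (g.norm_coe_le_norm x).trans_eq (one_mul ‖g‖).symm

section Evaluation

variable (𝕜 X : Type*) [NontriviallyNormedField 𝕜] [TopologicalSpace X]

theorem isBounded_range_toWeakDual_evalCLM :
    Bornology.IsBounded (Set.range fun x : X =>
      (StrongDual.toWeakDual (evalCLM 𝕜 x) : WeakDual 𝕜 (X →ᵇ 𝕜))) := by
  rw [← WeakDual.isBounded_toWeakDual_preimage_iff_isBounded, isBounded_iff_forall_norm_le]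
  refine ⟨1, ?_⟩
  rintro _ ⟨x, rfl⟩
  exact norm_evalCLM_le_one 𝕜 x

/-- The weak* closure `K` of the evaluation functionals on the bounded continuous functions
`X → 𝕜`. For discrete `X` and `𝕜 = ℝ` these functions form `U_b(X)`, and `K` is the uniform
compactification of `X`. -/
def evalClosure : Set (WeakDual 𝕜 (X →ᵇ 𝕜)) :=
  closure (Set.range fun x : X => StrongDual.toWeakDual (evalCLM 𝕜 x))

variable [ProperSpace 𝕜]

theorem isCompact_evalClosure : IsCompact (evalClosure 𝕜 X) :=
  isCompact_closure_of_isBounded_weakDual (isBounded_range_toWeakDual_evalCLM 𝕜 X)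

variable {𝕜 X}

theorem image_apply_family_evalClosure {ι : Type*} (F : ι → X →ᵇ 𝕜) :
    (fun (ν : WeakDual 𝕜 (X →ᵇ 𝕜)) i => ν (F i)) '' evalClosure 𝕜 X =
      closure (Set.range fun (x : X) i => F i x) := by
  have hcont : Continuous fun (ν : WeakDual 𝕜 (X →ᵇ 𝕜)) i => ν (F i) :=
    continuous_weakDual_apply_family F
  rw [evalClosure, image_closure_of_isCompact (isCompact_evalClosure 𝕜 X) hcont.continuousOn,
    ← Set.range_comp]
  rfl

theorem stmt11_general [Mul X] (hmul : ∀ x : X, Continuous fun y => x * y) (f : X →ᵇ 𝕜) :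
    Continuous (fun (ν : WeakDual 𝕜 (X →ᵇ 𝕜)) (x : X) =>
        ν (f.compContinuous ⟨fun y => x * y, hmul x⟩)) ∧
      (fun (ν : WeakDual 𝕜 (X →ᵇ 𝕜)) (x : X) =>
          ν (f.compContinuous ⟨fun y => x * y, hmul x⟩)) '' evalClosure 𝕜 X =
        closure (Set.range fun x z : X => f (z * x)) :=
  ⟨continuous_weakDual_apply_family _, image_apply_family_evalClosure _⟩

end Evaluation

/-- The map `φ(ν) = (x ↦ ν (y ↦ f (x y)))` is continuous from the uniform compactification
`K` (the weak* closure of the evaluation functionals) to `ℝ^X`, and its image is the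
pointwise closure of the right orbit of `f`. -/
theorem stmt11 {X : Type*} [Semigroup X] [TopologicalSpace X] [DiscreteTopology X]
    (f : X →ᵇ ℝ) :
    ContinuousOn
      (fun ν : WeakDual ℝ (X →ᵇ ℝ) => fun x : X =>
        ν (f.compContinuous ⟨fun y => x * y, continuous_of_discreteTopology⟩))
      (closure (Set.range fun x : X => StrongDual.toWeakDual (evalCLM ℝ x))) ∧
    (fun ν : WeakDual ℝ (X →ᵇ ℝ) => fun x : X =>
        ν (f.compContinuous ⟨fun y => x * y, continuous_of_discreteTopology⟩)) ''
      (closure (Set.range fun x : X => StrongDual.toWeakDual (evalCLM ℝ x))) =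
      closure (Set.range fun x : X => fun z : X => f (z * x)) := by
  have h := stmt11_general (fun _ => continuous_of_discreteTopology) f
  exact ⟨h.1.continuousOn, h.2⟩
end
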